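/- arXiv:2510.27670 — 2 statements merged into one kernel-verified Lean document; each statement's English description precedes it below -/
import Mathlib

section
/- Let A₁, A₂, A₃ be hermitian 4×4 complex matrices, and identify ℂ⁴ with ℂ² ⊗ ℂ² via the Kronecker product. Every exposed face F of W = W(A₁,A₂,A₃) that contains more than one point contains a point p that lies in the topological frontier of the separable joint numerical range W^sep(A₁,A₂,A₃). -/
open Matrix ComplexOrder

noncomputable section

/-- A density matrix: positive semidefinite with unit trace. -/
def IsDensity {n : Type*} [Fintype n] (ρ : Matrix n n ℂ) : Prop :=
  ρ.PosSemidef ∧ ρ.trace = 1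

/-- The measurement map `ρ ↦ (tr ρA₁, …, tr ρA_k)` (the traces are real for
hermitian matrices). -/
def wpt {n : Type*} [Fintype n] {k : ℕ} (A : Fin k → Matrix n n ℂ)
    (ρ : Matrix n n ℂ) : Fin k → ℝ :=
  fun i => ((ρ * A i).trace).re

/-- The joint numerical range of `k` matrices. -/
def JNR {n : Type*} [Fintype n] {k : ℕ} (A : Fin k → Matrix n n ℂ) :
    Set (Fin k → ℝ) :=
  wpt A '' {ρ | IsDensity ρ}

/-- `F` is a face of the convex set `C`: a convex subset such that whenever an
open segment between two points of `C` meets `F`, both endpoints lie in `F`. -/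
def IsFaceOf {E : Type*} [AddCommGroup E] [Module ℝ E] (C F : Set E) : Prop :=
  Convex ℝ F ∧ IsExtreme ℝ C F

/-- The dimension of a convex set: the dimension of its affine hull. -/
def convDim {E : Type*} [AddCommGroup E] [Module ℝ E] (F : Set E) : ℕ :=
  Module.finrank ℝ (affineSpan ℝ F).direction

/-- Euclidean dot product on `Fin d → ℝ`. -/
def dotR {d : ℕ} (u v : Fin d → ℝ) : ℝ := ∑ i, u i * v i

/-- `F` is an exposed face of `C`: the set of minimizers of a linear functional. -/
def IsExposedFace {d : ℕ} (C F : Set (Fin d → ℝ)) : Prop :=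
  ∃ u : Fin d → ℝ, F = {x ∈ C | ∀ y ∈ C, dotR u x ≤ dotR u y}

/-- The normal cone of `C` at `p`. -/
def normalConeAt {d : ℕ} (C : Set (Fin d → ℝ)) (p : Fin d → ℝ) :
    Set (Fin d → ℝ) :=
  {u | ∀ y ∈ C, 0 ≤ dotR (y - p) u}

/-- `p` is a corner point of `C` if the normal cone of `C` at `p` spans `ℝ^d`. -/
def IsCornerPoint {d : ℕ} (C : Set (Fin d → ℝ)) (p : Fin d → ℝ) : Prop :=
  p ∈ C ∧ Submodule.span ℝ (normalConeAt C p) = ⊤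

/-- The closed unit disk of `ℝ²`. -/
def unitDisk2 : Set (Fin 2 → ℝ) := {v | v 0 ^ 2 + v 1 ^ 2 ≤ 1}

/-- An elliptic disk in `ℝ³`: the image of the closed unit disk of `ℝ²` under an
injective affine map. -/
def IsEllipticDisk (F : Set (Fin 3 → ℝ)) : Prop :=
  ∃ f : (Fin 2 → ℝ) →ᵃ[ℝ] (Fin 3 → ℝ), Function.Injective f ∧ F = f '' unitDisk2

/-- A non-elliptic face of `W`: a two-dimensional face that is not an elliptic
disk. -/
def IsNonEllipticFace (W F : Set (Fin 3 → ℝ)) : Prop :=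
  IsFaceOf W F ∧ convDim F = 2 ∧ ¬ IsEllipticDisk F

/-- A rank-3 face of the joint numerical range of `A`. -/
def IsRank3Face {k : ℕ} (A : Fin k → Matrix (Fin 4) (Fin 4) ℂ)
    (F : Set (Fin k → ℝ)) : Prop :=
  F.Nonempty ∧ IsFaceOf (JNR A) F ∧
    ∃ P : Matrix (Fin 4) (Fin 4) ℂ, Pᴴ = P ∧ P * P = P ∧ P.rank = 3 ∧
      ∀ ρ : Matrix (Fin 4) (Fin 4) ℂ, IsDensity ρ → (wpt A ρ ∈ F ↔ P * ρ * P = ρ)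

/-- A separable two-qubit density matrix, identifying `ℂ⁴ ≅ ℂ² ⊗ ℂ²` via the
Kronecker product. -/
def IsSeparableState (ρ : Matrix (Fin 4) (Fin 4) ℂ) : Prop :=
  ρ ∈ convexHull ℝ {μ : Matrix (Fin 4) (Fin 4) ℂ |
    ∃ σ τ : Matrix (Fin 2) (Fin 2) ℂ, IsDensity σ ∧ IsDensity τ ∧
      μ = Matrix.reindex finProdFinEquiv finProdFinEquiv
            (Matrix.kroneckerMap (· * ·) σ τ)}

/-- The separable joint numerical range of three hermitian `4×4` matrices. -/
def SepJNR (A : Fin 3 → Matrix (Fin 4) (Fin 4) ℂ) : Set (Fin 3 → ℝ) :=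
  wpt A '' {ρ | IsDensity ρ ∧ IsSeparableState ρ}

/-
The face `F` exposed by `u` consists of the images of the states minimising `ρ ↦ tr ρH`, where
`H = ∑ uᵢAᵢ`; these are the states supported on the ground space of `H`. Two points of `F` come from
two different such states, whose difference is traceless and therefore of rank at least two, so the
ground space is at least two-dimensional. In `ℂ² ⊗ ℂ²`, viewed as the space of `2 × 2` matrices, the
product vectors are the singular matrices, and every two-dimensional space of square complex
matrices contains a nonzero singular one. Hence a pure product state lies in the ground space, and
its image lies in `F` and in the separable range `W^sep`. If `u ≠ 0`, such a point cannot be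
interior to `W^sep ⊆ W`; if `u = 0`, then `F = W` is compact and contains the whole, nonempty,
frontier of `W^sep`.
-/

section LinearAlgebra

variable {m n K : Type*} [Field K] [Fintype n]

lemma exists_eq_vecMulVec_of_rank_le_one {M : Matrix m n K} (hM : M.rank ≤ 1) :
    ∃ (a : m → K) (b : n → K), M = vecMulVec a b := by
  classical
  obtain ⟨a, ha⟩ := finrank_le_one_iff.mp hM
  choose b hb using fun j => ha ⟨M *ᵥ Pi.single j 1, _, rfl⟩
  refine ⟨a, b, ext fun i j => ?_⟩
  simpa [vecMulVec_apply, mul_comm] using (congrFun (congrArg Subtype.val (hb j)) i).symm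

lemma rank_lt_card_of_det_eq_zero [DecidableEq n] {M : Matrix n n K} (hM : M.det = 0) :
    M.rank < Fintype.card n := by
  obtain ⟨v, hv, hMv⟩ := exists_mulVec_eq_zero_iff.mpr hM
  have hker : 0 < Module.finrank K (LinearMap.ker M.mulVecLin) :=
    Module.finrank_pos_iff_exists_ne_zero.mpr ⟨⟨v, hMv⟩, mt (congrArg Subtype.val) hv⟩
  have hrank := M.mulVecLin.finrank_range_add_finrank_ker
  rw [Module.finrank_pi] at hrank
  rw [Matrix.rank]
  lia

lemma exists_mem_ne_zero_det_eq_zero [IsAlgClosed K] [DecidableEq n]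
    (L : Submodule K (Matrix n n K)) (hL : 1 < Module.finrank K L) :
    ∃ X ∈ L, X ≠ 0 ∧ X.det = 0 := by
  obtain ⟨⟨Y, hYL⟩, hY⟩ := Module.finrank_pos_iff_exists_ne_zero.mp (zero_lt_one.trans hL)
  have hY0 : Y ≠ 0 := by simpa using hY
  by_cases hYdet : Y.det = 0
  · exact ⟨Y, hYL, hY0, hYdet⟩
  obtain ⟨⟨Z, hZL⟩, hYZ⟩ := exists_linearIndependent_pair_of_one_lt_finrank hL hY
  have : Nontrivial (Matrix n n K) := ⟨Y, 0, hY0⟩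
  obtain ⟨μ, hμ⟩ := spectrum.nonempty_of_isAlgClosed_of_finiteDimensional K (Y⁻¹ * Z)
  have hsingular : (algebraMap K (Matrix n n K) μ - Y⁻¹ * Z).det = 0 := by
    rwa [spectrum.mem_iff, isUnit_iff_isUnit_det, isUnit_iff_ne_zero, not_not] at hμ
  have hfactor : μ • Y - Z = Y * (algebraMap K (Matrix n n K) μ - Y⁻¹ * Z) := by
    rw [mul_sub, mul_nonsing_inv_cancel_left _ _ (isUnit_iff_ne_zero.mpr hYdet),
      Algebra.algebraMap_eq_smul_one, mul_smul_one]
  refine ⟨μ • Y - Z, L.sub_mem (L.smul_mem μ hYL) hZL, fun h => ?_, ?_⟩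
  · have := LinearIndependent.pair_iff.mp hYZ μ (-1)
      (Subtype.ext (by simpa [← sub_eq_add_neg] using h))
    simpa using this.2
  · rw [hfactor, det_mul, hsingular, mul_zero]

lemma one_lt_rank_of_isHermitian_of_trace_eq_zero {D : Matrix n n ℂ} (hD : D.IsHermitian)
    (htrace : D.trace = 0) (hD0 : D ≠ 0) : 1 < D.rank := by
  by_contra! h
  obtain ⟨a, b, hab⟩ := exists_eq_vecMulVec_of_rank_le_one h
  have hba : b ⬝ᵥ a = 0 := by rw [dotProduct_comm, ← trace_vecMulVec, ← hab, htrace]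
  have hsq : D * D = 0 := by
    rw [hab, vecMulVec_mul_vecMulVec, hba, zero_smul, vecMulVec_zero]
  exact hD0 (conjTranspose_mul_self_eq_zero.mp (by rwa [hD.eq]))

end LinearAlgebra

section TensorVec

/-- The elementary tensor `a ⊗ b`, as a vector of coordinates indexed by pairs. -/
def tensorVec {m n R : Type*} [Mul R] (a : m → R) (b : n → R) : m × n → R :=
  fun p => a p.1 * b p.2

lemma tensorVec_eq_zero_iff {m n R : Type*} [MulZeroClass R] [NoZeroDivisors R]
    {a : m → R} {b : n → R} : tensorVec a b = 0 ↔ a = 0 ∨ b = 0 := by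
  simp only [funext_iff, tensorVec, Prod.forall, Pi.zero_apply, mul_eq_zero, forall_or_left,
    forall_or_right]

lemma exists_tensorVec_comp_symm_mem {ι K : Type*} [Field K] [IsAlgClosed K]
    (e : Fin 2 × Fin 2 ≃ ι) (L : Submodule K (ι → K)) (hL : 1 < Module.finrank K L) :
    ∃ a b : Fin 2 → K, a ≠ 0 ∧ b ≠ 0 ∧ tensorVec a b ∘ e.symm ∈ L := by
  let toMatrix : (ι → K) ≃ₗ[K] Matrix (Fin 2) (Fin 2) K :=
    LinearEquiv.funCongrLeft K K e ≪≫ₗ LinearEquiv.curry K K (Fin 2) (Fin 2) ≪≫ₗ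
      Matrix.ofLinearEquiv K
  obtain ⟨_, ⟨z, hzL, rfl⟩, hz, hdet⟩ := exists_mem_ne_zero_det_eq_zero
    (L.map toMatrix.toLinearMap) (by rwa [LinearEquiv.finrank_map_eq])
  obtain ⟨a, b, hab⟩ := exists_eq_vecMulVec_of_rank_le_one
    (Nat.lt_succ_iff.mp (rank_lt_card_of_det_eq_zero hdet))
  have hze : z ∘ e = tensorVec a b := funext fun p => congrFun₂ hab p.1 p.2
  obtain rfl : z = tensorVec a b ∘ e.symm := (Equiv.eq_comp_symm e z _).mpr hze
  obtain ⟨ha, hb⟩ : a ≠ 0 ∧ b ≠ 0 := by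
    refine not_or.mp fun h => hz ?_
    rw [tensorVec_eq_zero_iff.mpr h, Pi.zero_comp, map_zero]
  exact ⟨a, b, ha, hb, hzL⟩

end TensorVec

section Density

variable {n : Type*} [Fintype n] {H M ρ σ : Matrix n n ℂ}

lemma ofReal_re_trace_mul (hM : M.IsHermitian) (hρ : ρ.IsHermitian) :
    (((ρ * M).trace.re : ℝ) : ℂ) = (ρ * M).trace := by
  rw [← Complex.conj_eq_iff_re, starRingEnd_apply, ← trace_conjTranspose, conjTranspose_mul, hM.eq,
    hρ.eq, trace_mul_comm]

open scoped MatrixOrder Matrix.Norms.L2Operator in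
lemma exists_eq_conjTranspose_mul_self (hM : M.PosSemidef) : ∃ B : Matrix n n ℂ, M = Bᴴ * B := by
  classical
  exact CStarAlgebra.nonneg_iff_eq_star_mul_self.mp hM.nonneg

lemma mul_eq_zero_of_trace_mul_eq_zero (hM : M.PosSemidef) (hρ : ρ.PosSemidef)
    (h : (ρ * M).trace = 0) : M * ρ = 0 := by
  obtain ⟨B, rfl⟩ := exists_eq_conjTranspose_mul_self hM
  obtain ⟨C, rfl⟩ := exists_eq_conjTranspose_mul_self hρ
  have hBC : B * Cᴴ = 0 := by
    rw [← trace_conjTranspose_mul_self_eq_zero_iff, ← h, conjTranspose_mul,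
      conjTranspose_conjTranspose, trace_mul_comm (Cᴴ * C), Matrix.mul_assoc, trace_mul_comm C]
    simp only [Matrix.mul_assoc]
  rw [Matrix.mul_assoc, ← Matrix.mul_assoc B, hBC, Matrix.zero_mul, Matrix.mul_zero]

/-- The pure state of `v`: the orthogonal projection onto the line spanned by `v`. The vector need
not be normalised; for `v = 0` the value is `0`, which is not a state. -/
def pureState (v : n → ℂ) : Matrix n n ℂ := (star v ⬝ᵥ v)⁻¹ • vecMulVec v (star v)

lemma isDensity_pureState {v : n → ℂ} (hv : v ≠ 0) : IsDensity (pureState v) := by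
  have hpos : 0 < star v ⬝ᵥ v := dotProduct_star_self_pos_iff.mpr hv
  refine ⟨(posSemidef_vecMulVec_self_star v).smul (inv_nonneg.mpr hpos.le), ?_⟩
  rw [pureState, trace_smul, trace_vecMulVec, dotProduct_comm v, smul_eq_mul,
    inv_mul_cancel₀ hpos.ne']

lemma trace_pureState_mul (v : n → ℂ) (M : Matrix n n ℂ) :
    (pureState v * M).trace = (star v ⬝ᵥ v)⁻¹ * (star v ⬝ᵥ M *ᵥ v) := by
  rw [pureState, smul_mul, trace_smul, smul_eq_mul, vecMulVec_mul, trace_vecMulVec,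
    dotProduct_comm v, dotProduct_mulVec]

lemma mul_pureState_of_mulVec_eq_smul {v : n → ℂ} {l : ℂ} (hv : H *ᵥ v = l • v) :
    H * pureState v = l • pureState v := by
  rw [pureState, Matrix.mul_smul, mul_vecMulVec, hv, smul_vecMulVec, smul_comm]

lemma pureState_comp_symm {m : Type*} [Fintype m] (e : m ≃ n) (v : m → ℂ) :
    pureState (v ∘ e.symm) = reindex e e (pureState v) := by
  have hnorm : star (v ∘ e.symm) ⬝ᵥ (v ∘ e.symm) = star v ⬝ᵥ v :=
    comp_equiv_dotProduct_comp_equiv (star v) v e.symm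
  ext i j
  simp [pureState, hnorm, vecMulVec_apply]

lemma pureState_tensorVec {m : Type*} [Fintype m] (a : m → ℂ) (b : n → ℂ) :
    pureState (tensorVec a b) = kroneckerMap (· * ·) (pureState a) (pureState b) := by
  have hnorm : star (tensorVec a b) ⬝ᵥ tensorVec a b = (star a ⬝ᵥ a) * (star b ⬝ᵥ b) := by
    simp only [dotProduct, tensorVec, Fintype.sum_prod_type, Finset.sum_mul_sum, Pi.star_apply,
      star_mul', mul_mul_mul_comm]
  ext ⟨i, j⟩ ⟨k, l⟩
  simp only [pureState, hnorm, Matrix.smul_apply, vecMulVec_apply, kroneckerMap_apply, tensorVec,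
    Pi.star_apply, star_mul', smul_eq_mul]
  ring

lemma posSemidef_of_forall_isDensity (hM : M.IsHermitian)
    (h : ∀ σ, IsDensity σ → 0 ≤ (σ * M).trace) : M.PosSemidef := by
  refine .of_dotProduct_mulVec_nonneg hM fun v => ?_
  obtain rfl | hv := eq_or_ne v 0
  · simp
  have hpos : 0 < star v ⬝ᵥ v := dotProduct_star_self_pos_iff.mpr hv
  rw [← mul_inv_cancel_left₀ hpos.ne' (star v ⬝ᵥ M *ᵥ v), ← trace_pureState_mul]
  exact mul_nonneg hpos.le (h _ (isDensity_pureState hv))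

lemma IsDensity.mul_eq_smul_of_isMinOn (hρ : IsDensity ρ) (hH : H.IsHermitian)
    (hmin : IsMinOn (fun σ => (σ * H).trace.re) {σ | IsDensity σ} ρ) :
    H * ρ = ((ρ * H).trace.re : ℂ) • ρ := by
  classical
  set l := (ρ * H).trace.re
  have htrace {σ : Matrix n n ℂ} (hσ : IsDensity σ) :
      (σ * (H - (l : ℂ) • 1)).trace = (((σ * H).trace.re - l : ℝ) : ℂ) := by
    simp [mul_sub, hσ.2, ofReal_re_trace_mul hH hσ.1.1]
  have hpsd : (H - (l : ℂ) • 1).PosSemidef := by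
    refine posSemidef_of_forall_isDensity (hH.sub (by simp [IsHermitian])) fun σ hσ => ?_
    rw [htrace hσ]
    exact_mod_cast sub_nonneg.mpr (hmin hσ)
  have hzero : (H - (l : ℂ) • 1) * ρ = 0 := mul_eq_zero_of_trace_mul_eq_zero hpsd hρ.1 (by
    rw [htrace hρ, sub_self, Complex.ofReal_zero])
  simpa [sub_mul, sub_eq_zero] using hzero

lemma one_lt_finrank_eigenspace [DecidableEq n] {l : ℂ} (hρ : IsDensity ρ) (hσ : IsDensity σ)
    (hρσ : ρ ≠ σ) (hHρ : H * ρ = l • ρ) (hHσ : H * σ = l • σ) :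
    1 < Module.finrank ℂ (Module.End.eigenspace H.toLin' l) := by
  have hrank : 1 < (ρ - σ).rank := one_lt_rank_of_isHermitian_of_trace_eq_zero
    (hρ.1.1.sub hσ.1.1) (by rw [trace_sub, hρ.2, hσ.2, sub_self]) (sub_ne_zero.mpr hρσ)
  have hHsub : H * (ρ - σ) = l • (ρ - σ) := by rw [mul_sub, hHρ, hHσ, smul_sub]
  refine hrank.trans_le (Submodule.finrank_mono ?_)
  rintro _ ⟨v, rfl⟩
  rw [Module.End.mem_eigenspace_iff, toLin'_apply, mulVecLin_apply, mulVec_mulVec, hHsub,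
    smul_mulVec]

open scoped Matrix.Norms.Frobenius in
lemma trace_conjTranspose_mul_self_eq_norm_sq (B : Matrix n n ℂ) :
    (Bᴴ * B).trace = ((‖B‖ ^ 2 : ℝ) : ℂ) := by
  rw [frobenius_norm_def, ← Real.sqrt_eq_rpow, Real.sq_sqrt (by positivity)]
  simp only [trace, diag_apply, mul_apply, conjTranspose_apply, Complex.star_def,
    Complex.conj_mul', Real.rpow_two]
  rw [Finset.sum_comm]
  norm_cast

open scoped Matrix.Norms.Frobenius in
lemma isCompact_setOf_isDensity : IsCompact {ρ : Matrix n n ℂ | IsDensity ρ} := by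
  have himage : {ρ : Matrix n n ℂ | IsDensity ρ} =
      (fun B => Bᴴ * B) '' Metric.sphere (0 : Matrix n n ℂ) 1 := by
    ext ρ
    constructor
    · rintro ⟨hρ, hρtrace⟩
      obtain ⟨B, rfl⟩ := exists_eq_conjTranspose_mul_self hρ
      rw [trace_conjTranspose_mul_self_eq_norm_sq] at hρtrace
      refine ⟨B, mem_sphere_zero_iff_norm.mpr ?_, rfl⟩
      rw [← pow_eq_one_iff_of_nonneg (norm_nonneg B) two_ne_zero]
      exact_mod_cast hρtrace
    · rintro ⟨B, hB, rfl⟩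
      refine ⟨posSemidef_conjTranspose_mul_self B, ?_⟩
      rw [trace_conjTranspose_mul_self_eq_norm_sq, mem_sphere_zero_iff_norm.mp hB, one_pow,
        Complex.ofReal_one]
  have := FiniteDimensional.proper ℝ (Matrix n n ℂ)
  rw [himage]
  exact (isCompact_sphere _ _).image (by fun_prop)

end Density

section Exposed

lemma inter_frontier_nonempty_of_isExposed {E : Type*} [NormedAddCommGroup E] [NormedSpace ℝ E]
    {C F S : Set E} (hF : IsExposed ℝ C F) (hC : IsClosed C) (hCuniv : C ≠ Set.univ) (hSC : S ⊆ C)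
    (hFS : (F ∩ S).Nonempty) : (F ∩ frontier S).Nonempty := by
  obtain ⟨l, rfl⟩ := hF hFS.left
  obtain ⟨p, hpF, hpS⟩ := hFS
  obtain rfl | hl := eq_or_ne l 0
  · have hSuniv : S ≠ Set.univ := fun h => hCuniv (Set.univ_subset_iff.mp (h ▸ hSC))
    obtain ⟨q, hq⟩ := nonempty_frontier_iff.mpr ⟨⟨p, hpS⟩, hSuniv⟩
    exact ⟨q, ⟨closure_minimal hSC hC (frontier_subset_closure hq), by simp⟩, hq⟩
  · refine ⟨p, hpF, subset_closure hpS, fun hpint => hl ?_⟩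
    have hmax : IsMaxOn l S p := fun y hy => hpF.2 y (hSC hy)
    exact (hmax.isLocalMax (mem_interior_iff_mem_nhds.mp hpint)).hasFDerivAt_eq_zero l.hasFDerivAt

lemma IsExposedFace.isExposed {d : ℕ} {C F : Set (Fin d → ℝ)} (hF : IsExposedFace C F) :
    IsExposed ℝ C F := by
  obtain ⟨u, rfl⟩ := hF
  refine fun _ => ⟨-LinearMap.toContinuousLinearMap (dotProductEquiv ℝ (Fin d) u), ?_⟩
  simp [dotR, dotProduct]

end Exposed

section JointNumericalRange

variable {n : Type*} [Fintype n] {k : ℕ}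

lemma isCompact_JNR (A : Fin k → Matrix n n ℂ) : IsCompact (JNR A) :=
  isCompact_setOf_isDensity.image (by unfold wpt; fun_prop)

lemma dotR_wpt (u : Fin k → ℝ) (A : Fin k → Matrix n n ℂ) (ρ : Matrix n n ℂ) :
    dotR u (wpt A ρ) = (ρ * ∑ i, (u i : ℂ) • A i).trace.re := by
  simp [dotR, wpt, Matrix.mul_sum, trace_sum]

/-- The separable joint numerical range of any number of `4 × 4` matrices; `SepJNR` is the case of
three. -/
def separableJNR (A : Fin k → Matrix (Fin 4) (Fin 4) ℂ) : Set (Fin k → ℝ) :=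
  wpt A '' {ρ | IsDensity ρ ∧ IsSeparableState ρ}

lemma separableJNR_subset_JNR (A : Fin k → Matrix (Fin 4) (Fin 4) ℂ) :
    separableJNR A ⊆ JNR A :=
  Set.image_mono fun _ => And.left

lemma isSeparableState_pureState {a b : Fin 2 → ℂ} (ha : a ≠ 0) (hb : b ≠ 0) :
    IsSeparableState (pureState (tensorVec a b ∘ (finProdFinEquiv (m := 2) (n := 2)).symm)) := by
  rw [pureState_comp_symm, pureState_tensorVec]
  exact subset_convexHull _ _ ⟨_, _, isDensity_pureState ha, isDensity_pureState hb, rfl⟩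

lemma exists_isSeparableState_mul_eq_smul {H : Matrix (Fin 4) (Fin 4) ℂ} {l : ℂ}
    (h : 1 < Module.finrank ℂ (Module.End.eigenspace H.toLin' l)) :
    ∃ ρ, IsDensity ρ ∧ IsSeparableState ρ ∧ H * ρ = l • ρ := by
  let e := finProdFinEquiv (m := 2) (n := 2)
  obtain ⟨a, b, ha, hb, hz⟩ := exists_tensorVec_comp_symm_mem e _ h
  have hz0 : tensorVec a b ∘ e.symm ≠ 0 :=
    e.symm.surjective.injective_comp_right.ne (mt tensorVec_eq_zero_iff.mp (not_or.mpr ⟨ha, hb⟩))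
  exact ⟨_, isDensity_pureState hz0, isSeparableState_pureState ha hb,
    mul_pureState_of_mulVec_eq_smul (Module.End.mem_eigenspace_iff.mp hz)⟩

lemma IsExposedFace.inter_separableJNR_nonempty {A : Fin k → Matrix (Fin 4) (Fin 4) ℂ}
    (hA : ∀ i, (A i).IsHermitian) {F : Set (Fin k → ℝ)} (hF : IsExposedFace (JNR A) F)
    (hFnontrivial : F.Nontrivial) : (F ∩ separableJNR A).Nonempty := by
  obtain ⟨u, rfl⟩ := hF
  obtain ⟨_, ⟨⟨ρ, hρ, rfl⟩, hρmin⟩, _, ⟨⟨σ, hσ, rfl⟩, hσmin⟩, hne⟩ := hFnontrivial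
  set H := ∑ i, (u i : ℂ) • A i with hHdef
  have hH : H.IsHermitian := by simp [IsHermitian, hHdef, conjTranspose_sum, (hA _).eq]
  have hmin {τ : Matrix (Fin 4) (Fin 4) ℂ} (hτ : ∀ y ∈ JNR A, dotR u (wpt A τ) ≤ dotR u y) :
      IsMinOn (fun τ => (τ * H).trace.re) {τ | IsDensity τ} τ := fun τ' hτ' => by
    have hle := hτ _ ⟨τ', hτ', rfl⟩
    rwa [dotR_wpt, dotR_wpt] at hle
  have hvalue : (σ * H).trace.re = (ρ * H).trace.re :=
    le_antisymm (hmin hσmin hρ) (hmin hρmin hσ)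
  have hfinrank : 1 < Module.finrank ℂ (Module.End.eigenspace H.toLin' (ρ * H).trace.re) :=
    one_lt_finrank_eigenspace hρ hσ (fun h => hne (congrArg (wpt A) h))
      (hρ.mul_eq_smul_of_isMinOn hH (hmin hρmin))
      (hvalue ▸ hσ.mul_eq_smul_of_isMinOn hH (hmin hσmin))
  obtain ⟨τ, hτ, hτsep, hHτ⟩ := exists_isSeparableState_mul_eq_smul hfinrank
  have hτvalue : dotR u (wpt A τ) = dotR u (wpt A ρ) := by
    rw [dotR_wpt, dotR_wpt, trace_mul_comm, hHτ, trace_smul, hτ.2, smul_eq_mul, mul_one,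
      Complex.ofReal_re]
  exact ⟨wpt A τ, ⟨⟨τ, hτ, rfl⟩, fun y hy => hτvalue.trans_le (hρmin y hy)⟩, τ, ⟨hτ, hτsep⟩, rfl⟩

end JointNumericalRange

theorem stmt18_general {k : ℕ} (A : Fin k → Matrix (Fin 4) (Fin 4) ℂ)
    (hA : ∀ i, (A i).IsHermitian)
    (F : Set (Fin k → ℝ)) (hF : IsExposedFace (JNR A) F) (hF2 : F.Nontrivial) :
    ∃ p ∈ F, p ∈ frontier (separableJNR A) := by
  have : Nontrivial (Fin k → ℝ) := Set.nontrivial_of_nontrivial hF2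
  exact inter_frontier_nonempty_of_isExposed hF.isExposed (isCompact_JNR A).isClosed
    (isCompact_JNR A).ne_univ (separableJNR_subset_JNR A) (hF.inter_separableJNR_nonempty hA hF2)

/-- every exposed face of `W` with more than one point contains a
point of the topological frontier of the separable joint numerical range. -/
theorem stmt18 (A : Fin 3 → Matrix (Fin 4) (Fin 4) ℂ)
    (hA : ∀ i, (A i).IsHermitian)
    (F : Set (Fin 3 → ℝ)) (hF : IsExposedFace (JNR A) F)
    (hF2 : ∃ x ∈ F, ∃ y ∈ F, x ≠ y) :
    ∃ p ∈ F, p ∈ frontier (SepJNR A) :=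
  stmt18_general A hA F hF hF2
end
end

section
/- Let A₁, A₂, A₃ be hermitian 4×4 complex matrices whose joint numerical range W = W(A₁,A₂,A₃) has dimension 3. If G is a one-dimensional nonexposed face of W, then there exists a unique two-dimensional exposed face H of W with G ⊆ H; moreover, G is an exposed face of H, and H is a non-elliptic face of W. -/
open Matrix ComplexOrder

noncomputable section

/-!
Exposed faces are stable under intersection, and a proper nonempty face of a convex set lies in a
proper exposed face, because a point of its relative interior carries a supporting hyperplane not
containing the whole set. Since dimension drops strictly along proper faces, a face of codimension
at most one is exposed, and a nonexposed face `G` of codimension two lies in an exposed face `H` of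
dimension `dim G + 1`. If `H'` is another one, then `H ∩ H'` is exposed, hence strictly larger than
`G`, and so equal to both `H` and `H'` for dimension reasons. Finally, a strictly convex set such as
a disk has no proper face with more than one point, so `H` is not an elliptic disk when
`dim G = 1`.
-/

section IntrinsicInterior

variable {E : Type*} [AddCommGroup E] [Module ℝ E] [TopologicalSpace E] [IsTopologicalAddGroup E]
  [ContinuousSMul ℝ E] {s C F : Set E} {p x : E}

lemma exists_mem_openSegment_of_mem_intrinsicInterior (hp : p ∈ intrinsicInterior ℝ s)
    (hx : x ∈ affineSpan ℝ s) : ∃ y ∈ s, p ∈ openSegment ℝ x y := by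
  obtain ⟨q, hq, rfl⟩ := mem_intrinsicInterior.1 hp
  have : Nonempty (affineSpan ℝ s) := ⟨q⟩
  obtain ⟨t, hts, ht : 1 < t⟩ :=
    (((eventually_homothety_mem_of_mem_interior ℝ (⟨x, hx⟩ : affineSpan ℝ s) hq).filter_mono
      nhdsWithin_le_nhds).and (self_mem_nhdsWithin (s := Set.Ioi 1))).exists
  have ht0 : 0 < t := one_pos.trans ht
  let y : E := AffineMap.lineMap x (q : E) t
  have hq_eq : AffineMap.lineMap x y t⁻¹ = (q : E) := by
    simp [y, AffineMap.lineMap_apply_module', smul_smul, ht0.ne']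
  have hq_mem := lineMap_mem_openSegment ℝ x y ⟨inv_pos.2 ht0, inv_lt_one_of_one_lt₀ ht⟩
  rw [hq_eq] at hq_mem
  exact ⟨y, hts, hq_mem⟩

lemma subset_of_isExtreme_of_mem_intrinsicInterior (hF : IsExtreme ℝ C F) (hs : s ⊆ C)
    (hp : p ∈ intrinsicInterior ℝ s) (hpF : p ∈ F) : s ⊆ F := by
  intro x hx
  obtain ⟨y, hy, hpy⟩ :=
    exists_mem_openSegment_of_mem_intrinsicInterior hp (subset_affineSpan ℝ s hx)
  exact hF.left_mem_of_mem_openSegment (hs hx) (hs hy) hpF hpy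

end IntrinsicInterior

section StrictConvex

lemma eq_of_isExtreme_of_strictConvex {E : Type*} [AddCommGroup E] [Module ℝ E]
    [TopologicalSpace E] [IsTopologicalAddGroup E] [ContinuousSMul ℝ E] {K G : Set E}
    (hK : StrictConvex ℝ K) (hG : IsExtreme ℝ K G) (hGc : Convex ℝ G) (hGn : G.Nontrivial) :
    G = K := by
  obtain ⟨a, ha, b, hb, hab⟩ := hGn
  have hm : midpoint ℝ a b ∈ interior K :=
    hK.openSegment_subset (hG.subset ha) (hG.subset hb) hab (midpoint_mem_openSegment a b)
  exact hG.subset.antisymm (subset_of_isExtreme_of_mem_intrinsicInterior hG subset_rfl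
    (interior_subset_intrinsicInterior hm) (hGc.midpoint_mem ha hb))

lemma isExtreme_preimage_of_injective {E F : Type*} [AddCommGroup E] [Module ℝ E] [AddCommGroup F]
    [Module ℝ F] {f : E →ᵃ[ℝ] F} (hf : Function.Injective f) {K : Set E} {G : Set F}
    (hG : IsExtreme ℝ (f '' K) G) : IsExtreme ℝ K (f ⁻¹' G) where
  subset _ hx := hf.mem_set_image.1 (hG.subset hx)
  left_mem_of_mem_openSegment x hx y hy _ hz hzxy :=
    hG.left_mem_of_mem_openSegment (Set.mem_image_of_mem f hx) (Set.mem_image_of_mem f hy) hz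
      (image_openSegment ℝ f x y ▸ Set.mem_image_of_mem f hzxy)

lemma strictConvex_unitDisk2 : StrictConvex ℝ unitDisk2 := by
  let e := (PiLp.continuousLinearEquiv 2 ℝ fun _ : Fin 2 => ℝ).symm
  have h : unitDisk2 = e ⁻¹' Metric.closedBall 0 1 := by
    ext v
    simp [unitDisk2, e, EuclideanSpace.norm_eq]
  rw [h]
  exact (strictConvex_closedBall ℝ _ _).linear_preimage e.toLinearMap e.continuous e.injective

end StrictConvex

section Dimension

variable {E : Type*} [AddCommGroup E] [Module ℝ E]

lemma nontrivial_of_convDim_pos {F : Set E} (h : 0 < convDim F) : F.Nontrivial := by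
  rw [← Set.not_subsingleton_iff]
  intro hF
  rw [convDim, direction_affineSpan, vectorSpan_of_subsingleton ℝ hF, finrank_bot] at h
  exact h.false

lemma affineSpan_eq_of_convDim_le [FiniteDimensional ℝ E] {C G : Set E} (h : G ⊆ C)
    (hG : G.Nonempty) (hd : convDim C ≤ convDim G) : affineSpan ℝ G = affineSpan ℝ C :=
  AffineSubspace.eq_of_direction_eq_of_nonempty_of_le
    (Submodule.eq_of_le_of_finrank_le (AffineSubspace.direction_le (affineSpan_mono ℝ h)) hd)
    (hG.affineSpan ℝ) (affineSpan_mono ℝ h)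

end Dimension

namespace IsFaceOf

lemma of_subset {E : Type*} [AddCommGroup E] [Module ℝ E] {C F G : Set E} (hG : IsFaceOf C G)
    (hGF : G ⊆ F) (hFC : F ⊆ C) : IsFaceOf F G :=
  ⟨hG.1, hG.2.mono hFC hGF⟩

lemma of_isExposed {E : Type*} [AddCommGroup E] [Module ℝ E] [TopologicalSpace E] {C F : Set E}
    (hF : IsExposed ℝ C F) (hC : Convex ℝ C) : IsFaceOf C F :=
  ⟨hF.convex hC, hF.isExtreme⟩

lemma not_isEllipticDisk {G H : Set (Fin 3 → ℝ)} (hG : IsFaceOf H G) (hGn : G.Nontrivial)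
    (hne : G ≠ H) : ¬ IsEllipticDisk H := by
  rintro ⟨f, hf, rfl⟩
  have hGf : f '' (f ⁻¹' G) = G :=
    Set.image_preimage_eq_of_subset (hG.2.subset.trans (Set.image_subset_range _ _))
  have hpre : f ⁻¹' G = unitDisk2 :=
    eq_of_isExtreme_of_strictConvex strictConvex_unitDisk2
      (isExtreme_preimage_of_injective hf hG.2) (hG.1.affine_preimage f)
      (Set.nontrivial_of_image f _ (hGf.symm ▸ hGn))
  exact hne (hpre ▸ hGf.symm)

variable {E : Type*} [NormedAddCommGroup E] [NormedSpace ℝ E] [FiniteDimensional ℝ E]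
  {C G : Set E}

lemma eq_of_convDim_le (hG : IsFaceOf C G) (hGn : G.Nonempty) (hd : convDim C ≤ convDim G) :
    G = C := by
  obtain ⟨p, hp⟩ := hGn.intrinsicInterior hG.1
  refine hG.2.subset.antisymm fun x hx => ?_
  have hxG : x ∈ affineSpan ℝ G :=
    affineSpan_eq_of_convDim_le hG.2.subset hGn hd ▸ subset_affineSpan ℝ C hx
  obtain ⟨y, hy, hpy⟩ := exists_mem_openSegment_of_mem_intrinsicInterior hp hxG
  exact hG.2.left_mem_of_mem_openSegment hx (hG.2.subset hy) (intrinsicInterior_subset hp) hpy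

lemma convDim_lt (hG : IsFaceOf C G) (hGn : G.Nonempty) (hne : G ≠ C) : convDim G < convDim C :=
  lt_of_not_ge fun hd => hne (hG.eq_of_convDim_le hGn hd)

end IsFaceOf

section Exposed

variable {E : Type*} [NormedAddCommGroup E] [NormedSpace ℝ E] [FiniteDimensional ℝ E]
  {C F F' G : Set E} {p : E}

-- Hahn-Banach is applied in the direction of `affineSpan ℝ C`, where `C - p` has interior points.
lemma exists_support_of_notMem_intrinsicInterior (hC : Convex ℝ C) (hp : p ∈ C)
    (hpi : p ∉ intrinsicInterior ℝ C) :
    ∃ f : StrongDual ℝ (affineSpan ℝ C).direction, f ≠ 0 ∧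
      ∀ v : (affineSpan ℝ C).direction, p + v ∈ C → f v ≤ 0 := by
  let q : affineSpan ℝ C := ⟨p, subset_affineSpan ℝ C hp⟩
  have : Nonempty C := ⟨⟨p, hp⟩⟩
  let φ := AffineIsometryEquiv.vaddConst ℝ q
  let D : Set (affineSpan ℝ C).direction := φ ⁻¹' ((↑) ⁻¹' C)
  have hD : Convex ℝ D :=
    hC.affine_preimage ((affineSpan ℝ C).subtype.comp φ.toAffineEquiv.toAffineMap)
  have hD_span : affineSpan ℝ D = ⊤ :=
    (AffineSubspace.comap_span φ.toAffineEquiv _).symm.trans <| by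
      rw [affineSpan_coe_preimage_eq_top, AffineSubspace.comap_top]
  have hD_int : (interior D).Nonempty := hD.interior_nonempty_iff_affineSpan_eq_top.2 hD_span
  have h0 : 0 ∉ interior D := by
    intro h
    have hq : φ 0 ∈ interior ((↑) ⁻¹' C) := (φ.toHomeomorph.preimage_interior _).symm.subset h
    exact hpi ⟨q, by simpa [φ] using hq, rfl⟩
  obtain ⟨f, hf, hfD⟩ := geometric_hahn_banach_of_nonempty_interior_point hD h0 hD_int
  refine ⟨f, hf, fun v hv => ?_⟩
  simpa using hfD v (by simpa [D, φ, q, add_comm] using hv)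

lemma exists_isExposed_ne_of_notMem_intrinsicInterior (hC : Convex ℝ C) (hp : p ∈ C)
    (hpi : p ∉ intrinsicInterior ℝ C) : ∃ F, IsExposed ℝ C F ∧ p ∈ F ∧ F ≠ C := by
  obtain ⟨f, hf, hfC⟩ := exists_support_of_notMem_intrinsicInterior hC hp hpi
  obtain ⟨l, hl⟩ := StrongDual.exists_extension _ f
  have hlp : ∀ y ∈ C, l y ≤ l p := by
    intro y hy
    have hyp : y - p ∈ (affineSpan ℝ C).direction :=
      AffineSubspace.vsub_mem_direction (subset_affineSpan ℝ C hy) (subset_affineSpan ℝ C hp)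
    have h := hfC ⟨y - p, hyp⟩ (by simpa using hy)
    rw [← hl] at h
    simpa using h
  refine ⟨l.toExposed C, ContinuousLinearMap.toExposed.isExposed, ⟨hp, hlp⟩, fun hlC => hf ?_⟩
  have hconst : ∀ x ∈ C, ∀ y ∈ C, l y ≤ l x := fun x hx => (hlC.symm ▸ hx : x ∈ l.toExposed C).2
  have hker : (affineSpan ℝ C).direction ≤ LinearMap.ker (l : E →ₗ[ℝ] ℝ) := by
    rw [direction_affineSpan, vectorSpan, Submodule.span_le]
    rintro _ ⟨x, hx, y, hy, rfl⟩
    simpa [sub_eq_zero] using (hconst y hy x hx).antisymm (hconst x hx y hy)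
  ext v
  rw [← hl]
  exact hker v.2

lemma IsFaceOf.exists_isExposed_ne (hC : Convex ℝ C) (hG : IsFaceOf C G) (hGn : G.Nonempty)
    (hne : G ≠ C) : ∃ F, IsExposed ℝ C F ∧ G ⊆ F ∧ F ≠ C := by
  obtain ⟨p, hp⟩ := hGn.intrinsicInterior hG.1
  have hpG : p ∈ G := intrinsicInterior_subset hp
  have hpi : p ∉ intrinsicInterior ℝ C := fun h => hne <| hG.2.subset.antisymm <|
    subset_of_isExtreme_of_mem_intrinsicInterior hG.2 subset_rfl h hpG
  obtain ⟨F, hF, hpF, hFC⟩ :=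
    exists_isExposed_ne_of_notMem_intrinsicInterior hC (hG.2.subset hpG) hpi
  exact ⟨F, hF,
    subset_of_isExtreme_of_mem_intrinsicInterior hF.isExtreme hG.2.subset hp hpF, hFC⟩

lemma IsFaceOf.exists_isExposed_convDim_lt (hC : Convex ℝ C) (hG : IsFaceOf C G)
    (hGn : G.Nonempty) (hne : G ≠ C) : ∃ F, IsExposed ℝ C F ∧ G ⊆ F ∧ convDim F < convDim C := by
  obtain ⟨F, hF, hGF, hFC⟩ := hG.exists_isExposed_ne hC hGn hne
  exact ⟨F, hF, hGF, (IsFaceOf.of_isExposed hF hC).convDim_lt (hGn.mono hGF) hFC⟩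

lemma IsFaceOf.isExposed_of_convDim_le_add_one (hC : Convex ℝ C) (hG : IsFaceOf C G)
    (hGn : G.Nonempty) (hd : convDim C ≤ convDim G + 1) : IsExposed ℝ C G := by
  obtain rfl | hne := eq_or_ne G C
  · exact IsExposed.refl G
  obtain ⟨F, hF, hGF, hFC⟩ := hG.exists_isExposed_convDim_lt hC hGn hne
  rwa [(hG.of_subset hGF hF.subset).eq_of_convDim_le hGn (by lia)]

lemma IsFaceOf.convDim_lt_of_isExposed (hG : IsFaceOf C G) (hGn : G.Nonempty)
    (hGne : ¬ IsExposed ℝ C G) (hF : IsExposed ℝ C F) (hGF : G ⊆ F) : convDim G < convDim F :=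
  (hG.of_subset hGF hF.subset).convDim_lt hGn fun h => hGne (h ▸ hF)

lemma IsFaceOf.exists_isExposed_convDim_eq_add_one (hC : Convex ℝ C) (hG : IsFaceOf C G)
    (hGn : G.Nonempty) (hGne : ¬ IsExposed ℝ C G) (hd : convDim C ≤ convDim G + 2) :
    ∃ F, IsExposed ℝ C F ∧ G ⊆ F ∧ convDim F = convDim G + 1 := by
  have hne : G ≠ C := fun h => hGne (h ▸ IsExposed.refl G)
  obtain ⟨F, hF, hGF, hFC⟩ := hG.exists_isExposed_convDim_lt hC hGn hne
  have hGF' := hG.convDim_lt_of_isExposed hGn hGne hF hGF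
  exact ⟨F, hF, hGF, by lia⟩

lemma IsFaceOf.eq_inter_of_convDim_le_add_one (hC : Convex ℝ C) (hG : IsFaceOf C G)
    (hGn : G.Nonempty) (hGne : ¬ IsExposed ℝ C G) (hF : IsExposed ℝ C F) (hGF : G ⊆ F)
    (hFd : convDim F ≤ convDim G + 1) (hF' : IsExposed ℝ C F') (hGF' : G ⊆ F') :
    F ∩ F' = F := by
  have hI : IsExposed ℝ C (F ∩ F') := hF.inter hF'
  have hGI : G ⊆ F ∩ F' := Set.subset_inter hGF hGF'
  have hlt := hG.convDim_lt_of_isExposed hGn hGne hI hGI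
  exact ((IsFaceOf.of_isExposed hI hC).of_subset Set.inter_subset_left hF.subset).eq_of_convDim_le
    (hGn.mono hGI) (by lia)

lemma IsFaceOf.isExposed_unique_of_convDim_le_add_one (hC : Convex ℝ C) (hG : IsFaceOf C G)
    (hGn : G.Nonempty) (hGne : ¬ IsExposed ℝ C G) (hF : IsExposed ℝ C F) (hGF : G ⊆ F)
    (hFd : convDim F ≤ convDim G + 1) (hF' : IsExposed ℝ C F') (hGF' : G ⊆ F')
    (hFd' : convDim F' ≤ convDim G + 1) : F = F' :=
  calc
    F = F ∩ F' := (hG.eq_inter_of_convDim_le_add_one hC hGn hGne hF hGF hFd hF' hGF').symm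
    _ = F' ∩ F := Set.inter_comm F F'
    _ = F' := hG.eq_inter_of_convDim_le_add_one hC hGn hGne hF' hGF' hFd' hF hGF

end Exposed

-- `IsExposed` maximizes where `IsExposedFace` minimizes, and always holds for the empty set.
lemma isExposedFace_iff_isExposed {d : ℕ} {C F : Set (Fin d → ℝ)} (hF : F.Nonempty) :
    IsExposedFace C F ↔ IsExposed ℝ C F := by
  constructor
  · rintro ⟨u, hu⟩ -
    refine ⟨-(dotProductEquiv ℝ (Fin d) u).toContinuousLinearMap, ?_⟩
    simpa [dotR, dotProduct] using hu
  · intro h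
    obtain ⟨l, hl⟩ := h hF
    obtain ⟨u, hu⟩ := (dotProductEquiv ℝ (Fin d)).surjective (-l : (Fin d → ℝ) →ₗ[ℝ] ℝ)
    have hdot : ∀ x, dotR u x = -l x := LinearMap.congr_fun hu
    exact ⟨u, by simpa [hdot] using hl⟩

section JointNumericalRange

variable {n : Type*} [Fintype n]

lemma convex_setOf_isDensity : Convex ℝ {ρ : Matrix n n ℂ | IsDensity ρ} := by
  rintro ρ ⟨hρ, hρ1⟩ σ ⟨hσ, hσ1⟩ a b ha hb hab
  refine ⟨(hρ.smul ha).add (hσ.smul hb), ?_⟩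
  rw [trace_add, trace_smul, trace_smul, hρ1, hσ1, ← add_smul, hab, one_smul]

lemma isLinearMap_wpt {k : ℕ} (A : Fin k → Matrix n n ℂ) : IsLinearMap ℝ (wpt A) where
  map_add ρ σ := by
    ext i
    simp [wpt, add_mul]
  map_smul c ρ := by
    ext i
    simp [wpt]

lemma convex_jnr {k : ℕ} (A : Fin k → Matrix n n ℂ) : Convex ℝ (JNR A) :=
  convex_setOf_isDensity.is_linear_image (isLinearMap_wpt A)

end JointNumericalRange

theorem stmt19_general {C G : Set (Fin 3 → ℝ)} (hC : Convex ℝ C) (hG : IsFaceOf C G)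
    (hGd : convDim G = 1) (hGne : ¬ IsExposedFace C G) :
    ∃ H : Set (Fin 3 → ℝ),
      (IsExposedFace C H ∧ convDim H = 2 ∧ G ⊆ H) ∧
      (∀ H', IsExposedFace C H' → convDim H' = 2 → G ⊆ H' → H' = H) ∧
      IsExposedFace H G ∧ IsNonEllipticFace C H := by
  have hGnt : G.Nontrivial := nontrivial_of_convDim_pos (by lia)
  have hGn : G.Nonempty := hGnt.nonempty
  rw [isExposedFace_iff_isExposed hGn] at hGne
  have hCd : convDim C ≤ 3 := (Submodule.finrank_le _).trans_eq (Module.finrank_fin_fun ℝ)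
  obtain ⟨H, hH, hGH, hHd⟩ := hG.exists_isExposed_convDim_eq_add_one hC hGn hGne (by lia)
  have hGfH : IsFaceOf H G := hG.of_subset hGH hH.subset
  have hHf : IsFaceOf C H := .of_isExposed hH hC
  refine ⟨H, ⟨(isExposedFace_iff_isExposed (hGn.mono hGH)).2 hH, by lia, hGH⟩, ?_, ?_,
    hHf, by lia, ?_⟩
  · intro H' hH' hHd' hGH'
    rw [isExposedFace_iff_isExposed (hGn.mono hGH')] at hH'
    exact hG.isExposed_unique_of_convDim_le_add_one hC hGn hGne hH' hGH' (by lia) hH hGH hHd.le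
  · rw [isExposedFace_iff_isExposed hGn]
    exact hGfH.isExposed_of_convDim_le_add_one hHf.1 hGn hHd.le
  · exact hGfH.not_isEllipticDisk hGnt fun h => hGne (h ▸ hH)

/-- every one-dimensional nonexposed face `G` of `W` is contained
in a unique two-dimensional exposed face `H` of `W`; moreover `G` is an exposed
face of `H` and `H` is a non-elliptic face of `W`. -/
theorem stmt19 (A : Fin 3 → Matrix (Fin 4) (Fin 4) ℂ)
    (hA : ∀ i, (A i).IsHermitian)
    (hdim : convDim (JNR A) = 3)
    (G : Set (Fin 3 → ℝ))
    (hG : IsFaceOf (JNR A) G) (hGd : convDim G = 1)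
    (hGne : ¬ IsExposedFace (JNR A) G) :
    ∃ H : Set (Fin 3 → ℝ),
      (IsExposedFace (JNR A) H ∧ convDim H = 2 ∧ G ⊆ H) ∧
      (∀ H', IsExposedFace (JNR A) H' → convDim H' = 2 → G ⊆ H' → H' = H) ∧
      IsExposedFace H G ∧ IsNonEllipticFace (JNR A) H :=
  stmt19_general (convex_jnr A) hG hGd hGne
end
end
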